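/- Let N be a positive natural number, let A be a 32×33 matrix over ZMod N, let α, β ∈ ZMod N, let t' : Fin 32 → ZMod N, let r : Fin 32 → ZMod N, and let π be a permutation of Fin 32. Define the 33×33 matrix M over ZMod N by M[i][j] = C(i,j)·α^j·β^{i−j} for j ≤ i and M[i][j] = 0 for j > i. Suppose that for a fixed i ∈ Fin 32, the i-th row of A·M equals r(π(i)) at column π(i) (as an element of Fin 33), equals t'(i) at column 32, and equals 0 at every other column. Then for every c ∈ ZMod N, Σ_{j ∈ Fin 33} A[i][j]·(α·c + β)^j − c^{32}·t'(i) = r(π(i))·c^{π(i)}. -/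

import Mathlib

/-- The lower-triangular binomial matrix `M` with `M[i][j] = C(i,j)·α^j·β^(i−j)` for `j ≤ i`. -/
def binomMat {R : Type*} [CommRing R] (α β : R) : Matrix (Fin 33) (Fin 33) R :=
  Matrix.of fun i j =>
    if (j : ℕ) ≤ (i : ℕ) then (Nat.choose i j : R) * α ^ (j : ℕ) * β ^ ((i : ℕ) - (j : ℕ)) else 0

/-- The binomial matrix maps the powers of `c` to the powers of `α * c + β`. -/
theorem sum_binomMat_mul_pow {R : Type*} [CommRing R] (α β c : R) (i : Fin 33) :
    ∑ j : Fin 33, binomMat α β i j * c ^ (j : ℕ) = (α * c + β) ^ (i : ℕ) := by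
  rw [add_pow]
  simp only [binomMat, Matrix.of_apply]
  rw [Fin.sum_univ_eq_sum_range (fun j => (if j ≤ (i : ℕ) then
    (Nat.choose i j : R) * α ^ j * β ^ ((i : ℕ) - j) else 0) * c ^ j) 33]
  have hsub : Finset.range ((i : ℕ) + 1) ⊆ Finset.range 33 :=
    Finset.range_subset_range.2 i.isLt
  rw [← Finset.sum_subset hsub]
  · refine Finset.sum_congr rfl fun j hj => ?_
    rw [if_pos (Nat.lt_succ_iff.1 (Finset.mem_range.1 hj)), mul_pow]
    ring
  · intro j _ hj
    rw [if_neg fun hle => hj (Finset.mem_range.2 (Nat.lt_succ_of_le hle)), zero_mul]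

theorem sum_mul_pow_eq_sum_mul_binomMat {m R : Type*} [CommRing R]
    (A : Matrix m (Fin 33) R) (α β c : R) (i : m) :
    ∑ j : Fin 33, A i j * (α * c + β) ^ (j : ℕ) =
      ∑ j : Fin 33, (A * binomMat α β) i j * c ^ (j : ℕ) := by
  simp only [← sum_binomMat_mul_pow, Matrix.mul_apply, Finset.mul_sum, Finset.sum_mul]
  rw [Finset.sum_comm]
  simp only [mul_assoc]

theorem stmt1 (N : ℕ) (hN : 0 < N)
    (A : Matrix (Fin 32) (Fin 33) (ZMod N)) (α β : ZMod N)
    (t' r : Fin 32 → ZMod N) (π : Equiv.Perm (Fin 32)) (i : Fin 32)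
    (h : ∀ j : Fin 33,
        (A * binomMat α β) i j =
          if j = Fin.castSucc (π i) then r (π i)
          else if j = Fin.last 32 then t' i
          else 0) :
    ∀ c : ZMod N,
      (∑ j : Fin 33, A i j * (α * c + β) ^ (j : ℕ)) - c ^ 32 * t' i
        = r (π i) * c ^ ((π i : ℕ)) := by
  intro c
  rw [sum_mul_pow_eq_sum_mul_binomMat, Fin.sum_univ_castSucc]
  simp only [h, Fin.castSucc_inj, Fin.castSucc_ne_last, (Fin.castSucc_ne_last _).symm, if_false,
    if_true, ite_mul, zero_mul, Finset.sum_ite_eq', Finset.mem_univ,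
    Fin.val_castSucc, Fin.val_last]
  ring
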